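/- Let k, ℓ ∈ ℕ and let ψ : [0,∞)^k × (ℝ^d)^ℓ → ℝ be bounded and continuous, and assume sup over s ∈ [0,∞)^k of the bounded-Lipschitz norm ‖ψ(s,·)‖_{bL} is finite (i.e., the functions ψ(s,·) are uniformly bounded and uniformly Lipschitz in the spatial variable). Let μ₀ be a finite Borel measure on ℝ^d with compact support, and let (μ₀⁽ⁿ⁾)ₙ be finite Borel measures on ℝ^d converging weakly to μ₀. Then for every t > 0, (1/n^k) Σ_{0 ≤ r₁ < r₂ < ⋯ < r_k ≤ ⌊nt⌋−1} ∫ ψ(r₁/n,…,r_k/n, x) d(μ₀⁽ⁿ⁾)^⊗ℓ(x) converges, as n → ∞, to ∫₀^t ds_k ∫₀^{s_k} ds_{k−1} ⋯ ∫₀^{s₂} ds₁ ∫ ψ(s₁,…,s_k, x) dμ₀^⊗ℓ(x). -/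

import Mathlib

open MeasureTheory Filter Topology

/-!
The shifted nodes `((rᵢ + 1) / n)ᵢ` are exactly the points of the lattice `n⁻¹ℤ^k` lying in the
half-open simplex `{0 < s₁ < ⋯ < s_k ≤ t}`. This set is bounded and convex, so its frontier is null
and lattice-point counting gives weak convergence of the measures `n⁻ᵏ ∑ δ` at these nodes to
Lebesgue measure on the simplex; moving the nodes by `1 / n` back to `(rᵢ / n)ᵢ` does not change the
limit. Each Riemann sum is the integral of `ψ` against the product of such a measure with
`(μ₀⁽ⁿ⁾)^⊗ℓ`, and weak convergence of finite measures passes to products.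
-/

open TopologicalSpace
open scoped NNReal BoundedContinuousFunction

section ProductConvergence

variable {γ : Type*} {l : Filter γ}

instance subsingleton_finiteMeasure {Ω : Type*} [MeasurableSpace Ω] [IsEmpty Ω] :
    Subsingleton (FiniteMeasure Ω) :=
  inferInstanceAs (Subsingleton (Subtype _))

lemma tendsto_smul_toFiniteMeasure {Ω : Type*} [MeasurableSpace Ω] [TopologicalSpace Ω]
    [OpensMeasurableSpace Ω] {c : γ → ℝ≥0} {c₀ : ℝ≥0} {P : γ → ProbabilityMeasure Ω}
    {P₀ : ProbabilityMeasure Ω} (hc : Tendsto c l (𝓝 c₀)) (hP : c₀ ≠ 0 → Tendsto P l (𝓝 P₀)) :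
    Tendsto (fun a => c a • (P a).toFiniteMeasure) l (𝓝 (c₀ • P₀.toFiniteMeasure)) := by
  rcases eq_or_ne c₀ 0 with rfl | hc₀
  · -- `P a` need not converge here; it is enough that the total masses tend to `0`.
    rw [zero_smul]
    refine FiniteMeasure.tendsto_zero_of_tendsto_zero_mass (hc.congr fun a => ?_)
    simp [FiniteMeasure.mass]
  · exact hc.smul ((ProbabilityMeasure.tendsto_nhds_iff_toFiniteMeasure_tendsto_nhds l).1 (hP hc₀))

lemma prod_eq_mass_mul_mass_smul_prod_normalize {α β : Type*} [MeasurableSpace α]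
    [MeasurableSpace β] [Nonempty α] [Nonempty β] (μ : FiniteMeasure α) (ν : FiniteMeasure β) :
    μ.prod ν = (μ.mass * ν.mass) • (μ.normalize.prod ν.normalize).toFiniteMeasure := by
  refine Subtype.ext (Measure.prod_eq fun s t _ _ => ?_)
  simp_rw [FiniteMeasure.val_eq_toMeasure, ← FiniteMeasure.ennreal_coeFn_eq_coeFn_toMeasure]
  rw [μ.self_eq_mass_mul_normalize, ν.self_eq_mass_mul_normalize, FiniteMeasure.smul_apply,
    ProbabilityMeasure.coeFn_toFiniteMeasure, ProbabilityMeasure.prod_prod, smul_eq_mul,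
    mul_mul_mul_comm, ENNReal.coe_mul]

lemma pi_eq_prod_mass_smul_pi_normalize {ι : Type*} [Fintype ι] {α : ι → Type*}
    [∀ i, MeasurableSpace (α i)] [∀ i, Nonempty (α i)] (μ : ∀ i, FiniteMeasure (α i)) :
    FiniteMeasure.pi μ =
      (∏ i, (μ i).mass) • (ProbabilityMeasure.pi fun i => (μ i).normalize).toFiniteMeasure := by
  refine Subtype.ext (Measure.pi_eq fun s _ => ?_)
  simp_rw [FiniteMeasure.val_eq_toMeasure, ← FiniteMeasure.ennreal_coeFn_eq_coeFn_toMeasure]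
  rw [Finset.prod_congr rfl fun i _ =>
      congrArg ((↑) : ℝ≥0 → ENNReal) ((μ i).self_eq_mass_mul_normalize (s i)),
    FiniteMeasure.smul_apply, ProbabilityMeasure.coeFn_toFiniteMeasure, ProbabilityMeasure.pi_pi,
    smul_eq_mul, ← Finset.prod_mul_distrib, ENNReal.ofNNReal_finsetProd]

lemma tendsto_finiteMeasure_prod {α β : Type*}
    [TopologicalSpace α] [SecondCountableTopology α] [PseudoMetrizableSpace α]
    [MeasurableSpace α] [OpensMeasurableSpace α]
    [TopologicalSpace β] [SecondCountableTopology β] [PseudoMetrizableSpace β]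
    [MeasurableSpace β] [OpensMeasurableSpace β]
    {μ : γ → FiniteMeasure α} {μ₀ : FiniteMeasure α} {ν : γ → FiniteMeasure β}
    {ν₀ : FiniteMeasure β} (hμ : Tendsto μ l (𝓝 μ₀)) (hν : Tendsto ν l (𝓝 ν₀)) :
    Tendsto (fun a => (μ a).prod (ν a)) l (𝓝 (μ₀.prod ν₀)) := by
  rcases isEmpty_or_nonempty (α × β) with h | h
  · exact tendsto_nhds_of_eventually_eq (.of_forall fun _ => Subsingleton.elim _ _)
  obtain ⟨_, _⟩ := nonempty_prod.1 h
  simp_rw [prod_eq_mass_mul_mass_smul_prod_normalize]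
  refine tendsto_smul_toFiniteMeasure (hμ.mass.mul hν.mass) fun hne => ?_
  have hμ₀ : μ₀ ≠ 0 := μ₀.mass_nonzero_iff.1 (left_ne_zero_of_mul hne)
  have hν₀ : ν₀ ≠ 0 := ν₀.mass_nonzero_iff.1 (right_ne_zero_of_mul hne)
  exact (ProbabilityMeasure.continuous_prod.tendsto _).comp
    ((FiniteMeasure.tendsto_normalize_of_tendsto hμ hμ₀).prodMk_nhds
      (FiniteMeasure.tendsto_normalize_of_tendsto hν hν₀))

lemma tendsto_finiteMeasure_pi {ι : Type*} [Fintype ι] {α : ι → Type*}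
    [∀ i, TopologicalSpace (α i)] [∀ i, SecondCountableTopology (α i)]
    [∀ i, PseudoMetrizableSpace (α i)] [∀ i, MeasurableSpace (α i)]
    [∀ i, OpensMeasurableSpace (α i)] {μ : γ → ∀ i, FiniteMeasure (α i)}
    {μ₀ : ∀ i, FiniteMeasure (α i)} (hμ : ∀ i, Tendsto (fun a => μ a i) l (𝓝 (μ₀ i))) :
    Tendsto (fun a => FiniteMeasure.pi (μ a)) l (𝓝 (FiniteMeasure.pi μ₀)) := by
  rcases isEmpty_or_nonempty (∀ i, α i) with h | h
  · exact tendsto_nhds_of_eventually_eq (.of_forall fun _ => Subsingleton.elim _ _)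
  have _ i : Nonempty (α i) := Nonempty.map (· i) h
  simp_rw [pi_eq_prod_mass_smul_pi_normalize]
  refine tendsto_smul_toFiniteMeasure (tendsto_finsetProd _ fun i _ => (hμ i).mass) fun hne => ?_
  have hμ₀ i : μ₀ i ≠ 0 :=
    (μ₀ i).mass_nonzero_iff.1 (Finset.prod_ne_zero_iff.1 hne i (Finset.mem_univ i))
  exact (ProbabilityMeasure.continuous_pi.tendsto _).comp
    (tendsto_pi_nhds.2 fun i => FiniteMeasure.tendsto_normalize_of_tendsto (hμ i) (hμ₀ i))

lemma tendsto_integral_integral_of_tendsto {α β : Type*}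
    [TopologicalSpace α] [SecondCountableTopology α] [PseudoMetrizableSpace α]
    [MeasurableSpace α] [OpensMeasurableSpace α]
    [TopologicalSpace β] [SecondCountableTopology β] [PseudoMetrizableSpace β]
    [MeasurableSpace β] [OpensMeasurableSpace β]
    {μ : γ → FiniteMeasure α} {μ₀ : FiniteMeasure α} {ν : γ → FiniteMeasure β}
    {ν₀ : FiniteMeasure β} (hμ : Tendsto μ l (𝓝 μ₀)) (hν : Tendsto ν l (𝓝 ν₀))
    (f : α × β →ᵇ ℝ) :
    Tendsto (fun a => ∫ x, ∫ y, f (x, y) ∂(ν a : Measure β) ∂(μ a : Measure α)) l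
      (𝓝 (∫ x, ∫ y, f (x, y) ∂(ν₀ : Measure β) ∂(μ₀ : Measure α))) := by
  have hprod (ρ : FiniteMeasure α) (σ : FiniteMeasure β) :
      ∫ x, ∫ y, f (x, y) ∂(σ : Measure β) ∂(ρ : Measure α) =
        ∫ p, f p ∂(ρ.prod σ : Measure (α × β)) :=
    (integral_prod f (f.integrable (ρ.prod σ : Measure (α × β)))).symm
  simp_rw [hprod]
  exact FiniteMeasure.tendsto_iff_forall_integral_tendsto.1 (tendsto_finiteMeasure_prod hμ hν) f

end ProductConvergence

section OrderSimplex

variable {κ : Type*} [Preorder κ] {t : ℝ}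

/-- The simplex of strictly increasing configurations of `κ` points in `(0, t]`. It is half-open so
that its intersection with the lattice `n⁻¹ℤ^κ` consists exactly of the upper corners
`((rᵢ + 1) / n)ᵢ` of the grid cells indexed by strictly increasing `r` with values in
`{0, …, ⌊nt⌋ - 1}`. -/
def orderSimplex (κ : Type*) [Preorder κ] (t : ℝ) : Set (κ → ℝ) :=
  {s | StrictMono s ∧ ∀ i, s i ∈ Set.Ioc 0 t}

lemma orderSimplex_eq_iInter_inter_pi :
    orderSimplex κ t =
      (⋂ (i) (j) (_ : i < j), {s | s i < s j}) ∩ Set.univ.pi fun _ => Set.Ioc 0 t := by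
  ext s
  simp [orderSimplex, StrictMono]

lemma convex_orderSimplex : Convex ℝ (orderSimplex κ t) := by
  rw [orderSimplex_eq_iInter_inter_pi]
  refine .inter (convex_iInter fun i => convex_iInter fun j => convex_iInter fun _ => ?_)
    (convex_pi fun _ _ => convex_Ioc 0 t)
  simpa [sub_neg] using
    convex_halfSpace_lt (LinearMap.proj (R := ℝ) (φ := fun _ : κ => ℝ) i - .proj j).isLinear 0

lemma measurableSet_orderSimplex [Countable κ] : MeasurableSet (orderSimplex κ t) := by
  rw [orderSimplex_eq_iInter_inter_pi]
  exact .inter (.iInter fun i => .iInter fun j => .iInter fun _ =>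
    measurableSet_lt (measurable_pi_apply i) (measurable_pi_apply j))
    (.univ_pi fun _ => measurableSet_Ioc)

lemma isBounded_orderSimplex : Bornology.IsBounded (orderSimplex κ t) :=
  (Bornology.IsBounded.pi fun _ => Metric.isBounded_Ioc 0 t).subset fun _ hs i _ => hs.2 i

lemma orderSimplex_ae_eq_Ioo [Fintype κ] :
    orderSimplex κ t =ᵐ[volume] {s | StrictMono s ∧ ∀ i, s i ∈ Set.Ioo 0 t} := by
  have hne : ∀ᵐ s : κ → ℝ, ∀ i, s i ≠ t :=
    ae_all_iff.2 fun i => Measure.ae_eval_ne (μ := fun _ : κ => (volume : Measure ℝ)) i t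
  filter_upwards [hne] with s hs
  refine propext (and_congr_right fun _ => forall_congr' fun i => ?_)
  exact and_congr_right fun _ => (hs i).le_iff_lt

end OrderSimplex

section RiemannSums

/-- The measure `c ∑_{a ∈ T} δ_{x a}`, through which a Riemann sum is an integral. -/
noncomputable def scaledPointMasses {α E : Type*} [MeasurableSpace E] (c : ℝ≥0) (T : Finset α)
    (x : α → E) : FiniteMeasure E :=
  c • ∑ a ∈ T, (diracProba (x a)).toFiniteMeasure

lemma integral_scaledPointMasses {α E : Type*} [MeasurableSpace E] [MeasurableSingletonClass E]
    (c : ℝ≥0) (T : Finset α) (x : α → E) (f : E → ℝ) :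
    ∫ y, f y ∂(scaledPointMasses c T x : Measure E) = c * ∑ a ∈ T, f (x a) := by
  rw [scaledPointMasses, FiniteMeasure.toMeasure_smul, FiniteMeasure.toMeasure_sum,
    integral_smul_nnreal_measure, integral_finsetSum_measure, NNReal.smul_def, smul_eq_mul]
  · exact congrArg _ (Finset.sum_congr rfl fun a _ => integral_dirac f (x a))
  · exact fun a _ => integrable_dirac (by simp)

variable {κ : Type*} [Preorder κ] {t : ℝ}

lemma exists_fin_add_one_div_eq_iff {n : ℕ} (hn : 0 < n) {x : ℝ} :
    (∃ r : Fin ⌊(n : ℝ) * t⌋₊, ((r : ℝ) + 1) / n = x) ↔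
      x ∈ Set.Ioc 0 t ∧ n * x ∈ Set.range (algebraMap ℤ ℝ) := by
  have hn' : (0 : ℝ) < n := Nat.cast_pos.2 hn
  constructor
  · rintro ⟨r, rfl⟩
    have hr : ((r : ℕ) + 1 : ℕ) ≤ (n : ℝ) * t := (Nat.le_floor_iff' r.1.succ_ne_zero).1 r.2
    refine ⟨⟨by positivity, ?_⟩, (r : ℕ) + 1, ?_⟩
    · rw [div_le_iff₀' hn']
      exact_mod_cast hr
    · simp [field]
  · rintro ⟨⟨hx, hxt⟩, z, hz⟩
    rw [eq_intCast] at hz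
    have hz_pos : 0 < z := by
      exact_mod_cast hz ▸ mul_pos hn' hx
    obtain ⟨r, rfl⟩ := Int.eq_succ_of_zero_lt hz_pos
    have hr : ((r + 1 : ℕ) : ℝ) = n * x := by exact_mod_cast hz
    refine ⟨⟨r, (Nat.le_floor_iff' r.succ_ne_zero).2 ?_⟩, ?_⟩
    · rw [hr]
      gcongr
    · rw [div_eq_iff hn'.ne', mul_comm x]
      exact_mod_cast hr

lemma strictMono_add_one_div_iff {n m : ℕ} (hn : 0 < n) {r : κ → Fin m} :
    StrictMono (fun i => ((r i : ℝ) + 1) / n) ↔ StrictMono r := by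
  have hn' : (0 : ℝ) < n := Nat.cast_pos.2 hn
  simp [StrictMono, div_lt_div_iff_of_pos_right hn']

lemma injective_add_one_div {κ : Type*} {n m : ℕ} (hn : 0 < n) :
    Function.Injective fun (r : κ → Fin m) i => ((r i : ℝ) + 1) / n := by
  have hn' : (n : ℝ) ≠ 0 := Nat.cast_ne_zero.2 hn.ne'
  intro r r' h
  ext i
  simpa [div_left_inj' hn'] using congrFun h i

open scoped Pointwise in
lemma image_add_one_div_eq_orderSimplex_inter_lattice [Finite κ] {n : ℕ} (hn : 0 < n) :
    (fun (r : κ → Fin ⌊(n : ℝ) * t⌋₊) i => ((r i : ℝ) + 1) / n) '' {r | StrictMono r} =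
      orderSimplex κ t ∩ (n : ℝ)⁻¹ • (Submodule.span ℤ (Set.range (Pi.basisFun ℝ κ)) : Set _) := by
  have : Fintype κ := Fintype.ofFinite κ
  have : NeZero n := ⟨hn.ne'⟩
  ext s
  rw [Set.mem_inter_iff, ← Submodule.coe_pointwise_smul, SetLike.mem_coe,
    BoxIntegral.unitPartition.mem_smul_span_iff]
  constructor
  · rintro ⟨r, hr, rfl⟩
    have h i := (exists_fin_add_one_div_eq_iff hn).1 ⟨r i, rfl⟩
    exact ⟨⟨(strictMono_add_one_div_iff hn).2 hr, fun i => (h i).1⟩, fun i => (h i).2⟩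
  · rintro ⟨⟨hs, hst⟩, hlattice⟩
    choose r hr using fun i => (exists_fin_add_one_div_eq_iff hn).2 ⟨hst i, hlattice i⟩
    obtain rfl := funext hr
    exact ⟨r, (strictMono_add_one_div_iff hn).1 hs, rfl⟩

variable [Fintype κ] [DecidableEq κ] [DecidableLT κ]

open scoped Pointwise in
lemma tsum_orderSimplex_inter_lattice {n : ℕ} (hn : 0 < n) (f : (κ → ℝ) → ℝ) :
    ∑' s : ↑(orderSimplex κ t ∩
        (n : ℝ)⁻¹ • (Submodule.span ℤ (Set.range (Pi.basisFun ℝ κ)) : Set _)), f s =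
      ∑ r : κ → Fin ⌊(n : ℝ) * t⌋₊ with StrictMono r, f fun i => ((r i : ℝ) + 1) / n := by
  rw [← image_add_one_div_eq_orderSimplex_inter_lattice hn,
    tsum_image f (injective_add_one_div hn).injOn, ← Finset.coe_filter_univ,
    Finset.tsum_subtype' _ fun r : κ → Fin ⌊(n : ℝ) * t⌋₊ => f fun i => ((r i : ℝ) + 1) / n]

/-- Lebesgue measure on `orderSimplex κ t`, as a finite measure. -/
noncomputable def orderSimplexMeasure (κ : Type*) [Preorder κ] [Fintype κ] (t : ℝ) :
    FiniteMeasure (κ → ℝ) :=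
  ⟨volume.restrict (orderSimplex κ t),
    isFiniteMeasure_restrict.2 isBounded_orderSimplex.measure_lt_top.ne⟩

lemma tendsto_scaledPointMasses_add_one_div :
    Tendsto (fun n : ℕ => scaledPointMasses (1 / (n : ℝ≥0) ^ Fintype.card κ)
        {r : κ → Fin ⌊(n : ℝ) * t⌋₊ | StrictMono r} fun r i => ((r i : ℝ) + 1) / n)
      atTop (𝓝 (orderSimplexMeasure κ t)) := by
  refine FiniteMeasure.tendsto_iff_forall_integral_tendsto.2 fun f => ?_
  have hsum := tendsto_tsum_div_pow_atTop_integral (orderSimplex κ t) f f.continuous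
    isBounded_orderSimplex measurableSet_orderSimplex (convex_orderSimplex.addHaar_frontier volume)
  refine hsum.congr' ?_
  filter_upwards [eventually_gt_atTop 0] with n hn
  rw [tsum_orderSimplex_inter_lattice hn, integral_scaledPointMasses]
  push_cast
  ring

lemma tendsto_scaledPointMasses_div :
    Tendsto (fun n : ℕ => scaledPointMasses (1 / (n : ℝ≥0) ^ Fintype.card κ)
        {r : κ → Fin ⌊(n : ℝ) * t⌋₊ | StrictMono r} fun r i => (r i : ℝ) / n)
      atTop (𝓝 (orderSimplexMeasure κ t)) := by
  refine FiniteMeasure.tendsto_iff_forall_integral_tendsto.2 fun f => ?_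
  have hshift : Tendsto (fun n : ℕ => (diracProba (1 / (n : ℝ))).toFiniteMeasure) atTop
      (𝓝 (diracProba (0 : ℝ)).toFiniteMeasure) :=
    (ProbabilityMeasure.tendsto_nhds_iff_toFiniteMeasure_tendsto_nhds _).1
      ((continuous_diracProba.tendsto 0).comp tendsto_one_div_atTop_nhds_zero_nat)
  have hdirac (g : ℝ → ℝ) (ε : ℝ) : ∫ e, g e ∂(diracProba ε : Measure ℝ) = g ε :=
    integral_dirac g ε
  -- Translating the nodes by `1 / n` is integrating `f (s - e)` against `δ_{1 / n}(de)`.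
  have hlim := tendsto_integral_integral_of_tendsto
    (tendsto_scaledPointMasses_add_one_div (κ := κ) (t := t)) hshift
    (f.compContinuous ⟨fun p i => p.1 i - p.2, by fun_prop⟩)
  simpa [hdirac, integral_scaledPointMasses, add_div] using hlim

end RiemannSums

theorem simplex_riemann_sum_weak_convergence_general {κ ι X : Type*} [Fintype κ] [Preorder κ]
    [DecidableEq κ] [DecidableLT κ] [Fintype ι] [TopologicalSpace X] [SecondCountableTopology X]
    [PseudoMetrizableSpace X] [MeasurableSpace X] [OpensMeasurableSpace X]
    (ψ : (κ → ℝ) → (ι → X) → ℝ) (hcont : Continuous fun p : (κ → ℝ) × (ι → X) => ψ p.1 p.2)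
    (C : ℝ) (hbdd : ∀ s x, |ψ s x| ≤ C)
    (μ₀ : Measure X) [IsFiniteMeasure μ₀] (μn : ℕ → Measure X) [∀ n, IsFiniteMeasure (μn n)]
    (hconv : ∀ φ : X →ᵇ ℝ, Tendsto (fun n => ∫ x, φ x ∂(μn n)) atTop (𝓝 (∫ x, φ x ∂μ₀)))
    (t : ℝ) :
    Tendsto (fun n : ℕ => (1 / (n : ℝ) ^ Fintype.card κ) *
        ∑ r : κ → Fin ⌊(n : ℝ) * t⌋₊ with ∀ i j, i < j → r i < r j,
          ∫ x, ψ (fun i => (r i : ℝ) / n) x ∂(Measure.pi fun _ : ι => μn n))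
      atTop
      (𝓝 (∫ s in {s : κ → ℝ | (∀ i j, i < j → s i < s j) ∧ ∀ i, s i ∈ Set.Ioo 0 t},
        ∫ x, ψ s x ∂(Measure.pi fun _ : ι => μ₀))) := by
  let μ : FiniteMeasure X := ⟨μ₀, inferInstance⟩
  let ν (n : ℕ) : FiniteMeasure X := ⟨μn n, inferInstance⟩
  have hν : Tendsto ν atTop (𝓝 μ) := FiniteMeasure.tendsto_iff_forall_integral_tendsto.2 hconv
  have hlim := tendsto_integral_integral_of_tendsto
    (tendsto_scaledPointMasses_div (κ := κ) (t := t)) (tendsto_finiteMeasure_pi fun _ : ι => hν)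
    (.ofNormedAddCommGroup (fun p => ψ p.1 p.2) hcont C fun p => hbdd p.1 p.2)
  convert hlim.congr fun n => ?_ using 2
  · exact (setIntegral_congr_set orderSimplex_ae_eq_Ioo).symm
  · rw [integral_scaledPointMasses]
    push_cast
    rfl

/-- Let `ψ : [0,∞)^k × (ℝ^d)^ℓ → ℝ` be bounded continuous, with
`sup_s ‖ψ(s,·)‖_{bL} < ∞` (uniformly bounded and uniformly Lipschitz in the spatial
variable).  Let `μ₀` be a finite compactly supported Borel measure on `ℝ^d` and
`μ₀⁽ⁿ⁾ → μ₀` weakly.  Then the simplex Riemann sums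
`(1/n^k) Σ_{0 ≤ r₁ < ⋯ < r_k ≤ ⌊nt⌋-1} ∫ ψ(r/n, x) d(μ₀⁽ⁿ⁾)^⊗ℓ(x)` converge to
`∫_{0<s₁<⋯<s_k<t} ∫ ψ(s, x) dμ₀^⊗ℓ(x) ds`. -/
theorem simplex_riemann_sum_weak_convergence (d k ℓ : ℕ)
    (hd : 1 ≤ d) (hk : 1 ≤ k) (hℓ : 1 ≤ ℓ)
    (ψ : (Fin k → NNReal) → (Fin ℓ → EuclideanSpace ℝ (Fin d)) → ℝ)
    (hcont : Continuous fun p : (Fin k → NNReal) × (Fin ℓ → EuclideanSpace ℝ (Fin d)) =>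
      ψ p.1 p.2)
    (C : ℝ) (hbdd : ∀ s x, |ψ s x| ≤ C)
    (K : ℝ) (hlip : ∀ s x y, |ψ s x - ψ s y| ≤ K * dist x y)
    (μ₀ : Measure (EuclideanSpace ℝ (Fin d))) [IsFiniteMeasure μ₀]
    (hsupp : ∃ S : Set (EuclideanSpace ℝ (Fin d)), IsCompact S ∧ μ₀ Sᶜ = 0)
    (μn : ℕ → Measure (EuclideanSpace ℝ (Fin d))) [∀ n, IsFiniteMeasure (μn n)]
    (hconv : ∀ φ : BoundedContinuousFunction (EuclideanSpace ℝ (Fin d)) ℝ,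
      Tendsto (fun n => ∫ x, φ x ∂(μn n)) atTop (𝓝 (∫ x, φ x ∂μ₀)))
    (t : ℝ) (ht : 0 < t) :
    Tendsto (fun n : ℕ =>
        (1 / (n : ℝ) ^ k) *
          ∑ r ∈ Finset.univ.filter
              (fun r : Fin k → Fin (⌊(n : ℝ) * t⌋₊) => ∀ i j : Fin k, i < j → r i < r j),
            ∫ x, ψ (fun i => Real.toNNReal (((r i : ℕ) : ℝ) / n)) x
              ∂(Measure.pi fun _ : Fin ℓ => μn n))
      atTop
      (𝓝 (∫ s in {s : Fin k → ℝ | (∀ i j : Fin k, i < j → s i < s j) ∧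
            ∀ i, s i ∈ Set.Ioo 0 t},
          ∫ x, ψ (fun i => Real.toNNReal (s i)) x
            ∂(Measure.pi fun _ : Fin ℓ => μ₀))) := by
  convert simplex_riemann_sum_weak_convergence_general (fun s x => ψ (fun i => (s i).toNNReal) x)
    (by fun_prop) C (fun _ _ => hbdd _ _) μ₀ μn hconv t
  rw [Fintype.card_fin]
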